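/- arXiv:2203.02647 — 7 statements merged into one kernel-verified Lean document; each statement's English description precedes it below -/
import Mathlib

section
/- Let m ∈ ℝ, let λ ∈ ℂ, and let p : ℝ → ℝ be twice differentiable at a point y ∈ ℝ. Define the 2×2 complex matrices A^FN(λ;y) = [[-6iλ² - 3i p(y)² - i y, 6 p(y) λ + 3i p'(y) + m λ⁻¹], [6 p(y) λ - 3i p'(y) + m λ⁻¹, 6iλ² + 3i p(y)² + i y]] and B^FN(λ;y) = [[-iλ, p(y)], [p(y), iλ]]. Then for λ ≠ 0, the zero-curvature (compatibility) equation ∂A^FN/∂y - ∂B^FN/∂λ + [A^FN, B^FN] = 0 holds at (λ, y) if and only if p satisfies the Painlevé-II equation p''(y) - 2 p(y)³ - (2/3) y p(y) + (2/3) m = 0 at y. -/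
open Complex Matrix

/-- The Flaschka–Newell matrix `A^FN(λ; y)` for a function `p` and parameter `m`. -/
noncomputable def AFN (m : ℝ) (p : ℝ → ℝ) (l : ℂ) (y : ℝ) : Matrix (Fin 2) (Fin 2) ℂ :=
  !![-6 * I * l ^ 2 - 3 * I * (p y : ℂ) ^ 2 - I * (y : ℂ),
      6 * (p y : ℂ) * l + 3 * I * (Complex.ofReal (deriv p y)) + (m : ℂ) * l⁻¹;
     6 * (p y : ℂ) * l - 3 * I * (Complex.ofReal (deriv p y)) + (m : ℂ) * l⁻¹,
      6 * I * l ^ 2 + 3 * I * (p y : ℂ) ^ 2 + I * (y : ℂ)]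

/-- The Flaschka–Newell matrix `B^FN(λ; y)` for a function `p`. -/
noncomputable def BFN (p : ℝ → ℝ) (l : ℂ) (y : ℝ) : Matrix (Fin 2) (Fin 2) ℂ :=
  !![-I * l, (p y : ℂ); (p y : ℂ), I * l]

/-!
In the curvature `∂A/∂y - ∂B/∂λ + [A, B]` of the Flaschka–Newell pair the diagonal entries cancel
identically, and so do the powers of `λ` off the diagonal: the pole `m / λ` of `A` meets the factor
`λ` of `B`, leaving the constant `m`. What survives is the Painlevé-II expression times the fixed
nonzero matrix `[[0, 3i], [-3i, 0]]`.
-/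

/-- The curvature `∂A/∂y - ∂B/∂λ + [A, B]` of a Lax pair `(A, B)`, with entrywise derivatives. It
measures the failure of the linear systems `∂Ψ/∂λ = A Ψ` and `∂Ψ/∂y = B Ψ` to be compatible. -/
noncomputable def laxCurvature {n : Type*} [Fintype n] (A B : ℂ → ℝ → Matrix n n ℂ)
    (l : ℂ) (y : ℝ) : Matrix n n ℂ :=
  (of fun i j => deriv (fun t : ℝ => A l t i j) y) -
    (of fun i j => deriv (fun z : ℂ => B z y i j) l) + ⁅A l y, B l y⁆

/-- The left-hand side of the Painlevé-II equation with parameter `m`, evaluated on `p` at `y`;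
`p` solves the equation at `y` when this vanishes. -/
noncomputable def painleveII (m : ℝ) (p : ℝ → ℝ) (y : ℝ) : ℝ :=
  deriv (deriv p) y - 2 * (p y) ^ 3 - (2 / 3) * y * p y + (2 / 3) * m

theorem lie_traceless_fin_two {R : Type*} [CommRing R] (a b c a' b' c' : R) :
    ⁅!![a, b; c, -a], !![a', b'; c', -a']⁆ =
      !![b * c' - b' * c, 2 * (a * b' - a' * b); 2 * (a' * c - a * c'), b' * c - b * c'] := by
  rw [Ring.lie_def, mul_fin_two, mul_fin_two]
  ext i j
  fin_cases i <;> fin_cases j <;>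
    simp only [Fin.zero_eta, Fin.mk_one, Matrix.sub_apply, of_apply, cons_val] <;> ring

theorem AFN_eq_traceless (m : ℝ) (p : ℝ → ℝ) (l : ℂ) (y : ℝ) :
    AFN m p l y =
      !![-6 * I * l ^ 2 - 3 * I * p y ^ 2 - I * y, 6 * p y * l + 3 * I * (deriv p y : ℝ) + m * l⁻¹;
         6 * p y * l - 3 * I * (deriv p y : ℝ) + m * l⁻¹,
          -(-6 * I * l ^ 2 - 3 * I * p y ^ 2 - I * y)] := by
  have trace_zero : 6 * I * l ^ 2 + 3 * I * p y ^ 2 + I * y =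
      -(-6 * I * l ^ 2 - 3 * I * p y ^ 2 - I * y) := by ring
  rw [AFN, trace_zero]

theorem BFN_eq_traceless (p : ℝ → ℝ) (l : ℂ) (y : ℝ) :
    BFN p l y = !![-I * l, (p y : ℂ); (p y : ℂ), -(-I * l)] := by
  rw [BFN, neg_mul, neg_neg]

theorem lie_AFN_BFN (m : ℝ) (p : ℝ → ℝ) {l : ℂ} (hl : l ≠ 0) (y : ℝ) :
    ⁅AFN m p l y, BFN p l y⁆ =
      !![6 * I * p y * (deriv p y : ℝ),
          -6 * l * (deriv p y : ℝ) - 6 * I * p y ^ 3 - 2 * I * y * p y + 2 * I * m;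
         -6 * l * (deriv p y : ℝ) + 6 * I * p y ^ 3 + 2 * I * y * p y - 2 * I * m,
          -6 * I * p y * (deriv p y : ℝ)] := by
  have pole_cancels : l * l⁻¹ = 1 := mul_inv_cancel₀ hl
  rw [AFN_eq_traceless, BFN_eq_traceless, lie_traceless_fin_two]
  ext i j
  fin_cases i <;> fin_cases j <;> simp only [Fin.zero_eta, Fin.mk_one, of_apply, cons_val]
  · ring
  · linear_combination 2 * I * m * pole_cancels + 6 * l * (deriv p y : ℝ) * I_sq
  · linear_combination -2 * I * m * pole_cancels + 6 * l * (deriv p y : ℝ) * I_sq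
  · ring

theorem of_deriv_fin_two_apply {𝕜 F : Type*} [NontriviallyNormedField 𝕜] [NormedAddCommGroup F]
    [NormedSpace 𝕜 F] {a b c d : 𝕜 → F} {a' b' c' d' : F} {x : 𝕜}
    (ha : HasDerivAt a a' x) (hb : HasDerivAt b b' x)
    (hc : HasDerivAt c c' x) (hd : HasDerivAt d d' x) :
    (of fun i j => deriv (fun t => !![a t, b t; c t, d t] i j) x) = !![a', b'; c', d'] := by
  ext i j
  fin_cases i <;> fin_cases j
  exacts [ha.deriv, hb.deriv, hc.deriv, hd.deriv]

theorem of_deriv_AFN_apply (m : ℝ) {p : ℝ → ℝ} (l : ℂ) {y : ℝ}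
    (hp : DifferentiableAt ℝ p y) (hp' : DifferentiableAt ℝ (deriv p) y) :
    (of fun i j => deriv (fun t : ℝ => AFN m p l t i j) y) =
      !![-6 * I * p y * (deriv p y : ℝ) - I,
          6 * (deriv p y : ℝ) * l + 3 * I * (deriv (deriv p) y : ℝ);
         6 * (deriv p y : ℝ) * l - 3 * I * (deriv (deriv p) y : ℝ),
          -(-6 * I * p y * (deriv p y : ℝ) - I)] := by
  have hp_ofReal : HasDerivAt (fun t : ℝ => (p t : ℂ)) (deriv p y : ℝ) y :=
    hp.hasDerivAt.ofReal_comp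
  have hp'_ofReal : HasDerivAt (fun t : ℝ => ((deriv p t : ℝ) : ℂ)) (deriv (deriv p) y : ℝ) y :=
    hp'.hasDerivAt.ofReal_comp
  have hdiag : HasDerivAt (fun t : ℝ => -6 * I * l ^ 2 - 3 * I * (p t : ℂ) ^ 2 - I * (t : ℂ))
      (-6 * I * p y * (deriv p y : ℝ) - I) y := by
    refine ((((hp_ofReal.fun_pow 2).const_mul (3 * I)).const_sub (-6 * I * l ^ 2)).fun_sub
      ((hasDerivAt_id' y).ofReal_comp.const_mul I)).congr_deriv ?_
    push_cast
    ring
  have hlin := (hp_ofReal.const_mul 6).mul_const l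
  have hder := hp'_ofReal.const_mul (3 * I)
  simp only [AFN_eq_traceless]
  exact of_deriv_fin_two_apply hdiag ((hlin.fun_add hder).add_const (m * l⁻¹))
    ((hlin.fun_sub hder).add_const (m * l⁻¹)) hdiag.fun_neg

theorem of_deriv_BFN_apply (p : ℝ → ℝ) (l : ℂ) (y : ℝ) :
    (of fun i j => deriv (fun z : ℂ => BFN p z y i j) l) = !![-I, 0; 0, I] :=
  of_deriv_fin_two_apply (hasDerivAt_const_mul (-I)) (hasDerivAt_const l _)
    (hasDerivAt_const l _) (hasDerivAt_const_mul I)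

theorem laxCurvature_AFN_BFN {m : ℝ} {p : ℝ → ℝ} {l : ℂ} {y : ℝ} (hl : l ≠ 0)
    (hp : DifferentiableAt ℝ p y) (hp' : DifferentiableAt ℝ (deriv p) y) :
    laxCurvature (AFN m p) (BFN p) l y = (painleveII m p y : ℂ) • !![0, 3 * I; -3 * I, 0] := by
  rw [laxCurvature, of_deriv_AFN_apply m l hp hp', of_deriv_BFN_apply, lie_AFN_BFN m p hl]
  have ofReal_painleveII : (painleveII m p y : ℂ) =
      (deriv (deriv p) y : ℝ) - 2 * p y ^ 3 - 2 / 3 * y * p y + 2 / 3 * m := by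
    push_cast [painleveII]
    rfl
  rw [ofReal_painleveII]
  ext i j
  fin_cases i <;> fin_cases j <;>
    simp only [Fin.zero_eta, Fin.mk_one, Matrix.add_apply, Matrix.sub_apply, Matrix.smul_apply,
      smul_eq_mul, of_apply, cons_val] <;> ring

/-- For `λ ≠ 0`, the zero-curvature equation
`∂A^FN/∂y - ∂B^FN/∂λ + [A^FN, B^FN] = 0` holds at `(λ, y)` if and only if
`p` satisfies the Painlevé-II equation at `y`. -/
theorem zero_curvature_iff_painleveII (m : ℝ) (l : ℂ) (p : ℝ → ℝ) (y : ℝ)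
    (hl : l ≠ 0)
    (h1 : DifferentiableAt ℝ p y)
    (h2 : DifferentiableAt ℝ (deriv p) y) :
    ((Matrix.of fun i j => deriv (fun t : ℝ => AFN m p l t i j) y) -
        (Matrix.of fun i j => deriv (fun z : ℂ => BFN p z y i j) l) +
        (AFN m p l y * BFN p l y - BFN p l y * AFN m p l y) = 0) ↔
      deriv (deriv p) y - 2 * (p y) ^ 3 - (2 / 3) * y * p y + (2 / 3) * m = 0 := by
  change laxCurvature (AFN m p) (BFN p) l y = 0 ↔ painleveII m p y = 0
  have direction_ne_zero : !![0, 3 * I; -3 * I, 0] ≠ 0 := fun h => by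
    simpa using congrFun₂ h 0 1
  rw [laxCurvature_AFN_BFN hl h1 h2, smul_eq_zero_iff_left direction_ne_zero, ofReal_eq_zero]
end

section
/- Let U ⊆ ℝ be an open set, let m ∈ ℝ, and let σ : ℝ → ℝ be four times differentiable on U with σ'(y) ≠ 0 for all y ∈ U. Define p(y) = (1/2) σ''(y)/σ'(y) and W(y) = (1/2) σ'''(y)/σ'(y) - (3/4) (σ''(y)/σ'(y))². Then p satisfies the Painlevé-II equation p''(y) - 2 p(y)³ - (2/3) y p(y) + (2/3) m = 0 for all y ∈ U if and only if W'(y) + (σ''(y)/σ'(y)) W(y) - (1/3) (σ''(y)/σ'(y)) y + (2/3) m = 0 for all y ∈ U. -/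
/-!
Put `p = (1/2) σ''/σ'` and let `W` be half the Schwarzian derivative of `σ`. They are related by
the Riccati equation `p' = W + p²`. Differentiating it once and substituting it back for `p'`
gives `p'' = W' + 2 p W + 2 p³`, so `W' + 2 p W` absorbs the cubic term of Painlevé-II; since
`2 p = σ''/σ'`, the left-hand sides of the two equations agree at every point.
-/

open Filter Topology

variable {𝕜 : Type*} [NontriviallyNormedField 𝕜]

theorem deriv_deriv_of_riccati {𝔸 : Type*} [NormedCommRing 𝔸] [NormedAlgebra 𝕜 𝔸]
    {p W : 𝕜 → 𝔸} {y : 𝕜} (hW : DifferentiableAt 𝕜 W y)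
    (hp : ∀ᶠ t in 𝓝 y, HasDerivAt p (W t + p t ^ 2) t) :
    deriv (deriv p) y = deriv W y + 2 * p y * W y + 2 * p y ^ 3 := by
  have riccati : deriv p =ᶠ[𝓝 y] W + p ^ 2 := hp.mono fun _ ht => ht.deriv
  calc
    deriv (deriv p) y = deriv (W + p ^ 2) y := riccati.deriv_eq
    _ = deriv W y + 2 * p y * (W y + p y ^ 2) := by
      simpa using (hW.hasDerivAt.add (hp.self_of_nhds.pow 2)).deriv
    _ = deriv W y + 2 * p y * W y + 2 * p y ^ 3 := by ring

/-- Half the pre-Schwarzian derivative `f''/f'`: the function `p` of the Painlevé-II equation. -/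
noncomputable def halfPreSchwarzian (f : 𝕜 → 𝕜) (t : 𝕜) : 𝕜 :=
  (1 / 2) * deriv (deriv f) t / deriv f t

/-- Half the Schwarzian derivative of `f`: the potential `W` in the Riccati equation
`p' = W + p²` for `p = halfPreSchwarzian f`. -/
noncomputable def halfSchwarzian (f : 𝕜 → 𝕜) (t : 𝕜) : 𝕜 :=
  (1 / 2) * deriv (deriv (deriv f)) t / deriv f t - (3 / 4) * (deriv (deriv f) t / deriv f t) ^ 2

section

variable {f : 𝕜 → 𝕜} {y : 𝕜}

theorem differentiableAt_halfSchwarzian (h2 : DifferentiableAt 𝕜 (deriv f) y)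
    (h3 : DifferentiableAt 𝕜 (deriv (deriv f)) y)
    (h4 : DifferentiableAt 𝕜 (deriv (deriv (deriv f))) y) (hf' : deriv f y ≠ 0) :
    DifferentiableAt 𝕜 (halfSchwarzian f) y :=
  ((h4.const_mul _).div h2 hf').sub (((h3.div h2 hf').pow 2).const_mul _)

variable [NeZero (2 : 𝕜)]

theorem two_mul_halfPreSchwarzian (f : 𝕜 → 𝕜) (y : 𝕜) :
    2 * halfPreSchwarzian f y = deriv (deriv f) y / deriv f y := by
  rw [halfPreSchwarzian, mul_div_assoc, ← mul_assoc, mul_one_div_cancel two_ne_zero, one_mul]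

theorem hasDerivAt_halfPreSchwarzian (h2 : DifferentiableAt 𝕜 (deriv f) y)
    (h3 : DifferentiableAt 𝕜 (deriv (deriv f)) y) (hf' : deriv f y ≠ 0) :
    HasDerivAt (halfPreSchwarzian f) (halfSchwarzian f y + halfPreSchwarzian f y ^ 2) y := by
  have two_ne : (2 : 𝕜) ≠ 0 := two_ne_zero
  have four_eq : (4 : 𝕜) = 2 ^ 2 := by norm_num
  refine ((h3.hasDerivAt.const_mul (1 / 2)).div h2.hasDerivAt hf').congr_deriv ?_
  rw [halfSchwarzian, halfPreSchwarzian, four_eq]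
  field_simp
  ring

theorem deriv_deriv_halfPreSchwarzian (h2 : ∀ᶠ t in 𝓝 y, DifferentiableAt 𝕜 (deriv f) t)
    (h3 : ∀ᶠ t in 𝓝 y, DifferentiableAt 𝕜 (deriv (deriv f)) t)
    (h4 : DifferentiableAt 𝕜 (deriv (deriv (deriv f))) y) (hf' : deriv f y ≠ 0) :
    deriv (deriv (halfPreSchwarzian f)) y =
      deriv (halfSchwarzian f) y + 2 * halfPreSchwarzian f y * halfSchwarzian f y +
        2 * halfPreSchwarzian f y ^ 3 := by
  have hf'_near : ∀ᶠ t in 𝓝 y, deriv f t ≠ 0 := h2.self_of_nhds.continuousAt.eventually_ne hf'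
  refine deriv_deriv_of_riccati
    (differentiableAt_halfSchwarzian h2.self_of_nhds h3.self_of_nhds h4 hf') ?_
  filter_upwards [h2, h3, hf'_near] with t ht2 ht3 ht'
  exact hasDerivAt_halfPreSchwarzian ht2 ht3 ht'

end

theorem painleveII_iff_schwarzian_form_general [CharZero 𝕜] (U : Set 𝕜) (hU : IsOpen U) (m : 𝕜)
    (σ : 𝕜 → 𝕜)
    (h2 : ∀ y ∈ U, DifferentiableAt 𝕜 (deriv σ) y)
    (h3 : ∀ y ∈ U, DifferentiableAt 𝕜 (deriv (deriv σ)) y)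
    (h4 : ∀ y ∈ U, DifferentiableAt 𝕜 (deriv (deriv (deriv σ))) y)
    (hσ' : ∀ y ∈ U, deriv σ y ≠ 0) :
    (∀ y ∈ U,
        deriv (deriv (halfPreSchwarzian σ)) y - 2 * halfPreSchwarzian σ y ^ 3 -
          (2 / 3) * y * halfPreSchwarzian σ y + (2 / 3) * m = 0) ↔
      (∀ y ∈ U,
        deriv (halfSchwarzian σ) y + (deriv (deriv σ) y / deriv σ y) * halfSchwarzian σ y -
          (1 / 3) * (deriv (deriv σ) y / deriv σ y) * y + (2 / 3) * m = 0) := by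
  refine forall₂_congr fun y hy => ?_
  have hUy : U ∈ 𝓝 y := hU.mem_nhds hy
  rw [deriv_deriv_halfPreSchwarzian (eventually_of_mem hUy h2) (eventually_of_mem hUy h3)
    (h4 y hy) (hσ' y hy), ← two_mul_halfPreSchwarzian]
  ring_nf

/-- If `p = (1/2) σ''/σ'` and `W = (1/2) σ'''/σ' - (3/4)(σ''/σ')²` (half the Schwarzian
derivative of `σ`), then `p` satisfies the Painlevé-II equation with parameter `m` on `U`
if and only if `W' + (σ''/σ') W - (1/3)(σ''/σ') y + (2/3) m = 0` on `U`. -/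
theorem painleveII_iff_schwarzian_form (U : Set ℝ) (hU : IsOpen U) (m : ℝ) (σ : ℝ → ℝ)
    (h1 : ∀ y ∈ U, DifferentiableAt ℝ σ y)
    (h2 : ∀ y ∈ U, DifferentiableAt ℝ (deriv σ) y)
    (h3 : ∀ y ∈ U, DifferentiableAt ℝ (deriv (deriv σ)) y)
    (h4 : ∀ y ∈ U, DifferentiableAt ℝ (deriv (deriv (deriv σ))) y)
    (hσ' : ∀ y ∈ U, deriv σ y ≠ 0) :
    (∀ y ∈ U,
        deriv (deriv (fun t => (1 / 2) * deriv (deriv σ) t / deriv σ t)) y -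
            2 * ((1 / 2) * deriv (deriv σ) y / deriv σ y) ^ 3 -
            (2 / 3) * y * ((1 / 2) * deriv (deriv σ) y / deriv σ y) + (2 / 3) * m = 0) ↔
      (∀ y ∈ U,
        deriv (fun t => (1 / 2) * deriv (deriv (deriv σ)) t / deriv σ t -
            (3 / 4) * (deriv (deriv σ) t / deriv σ t) ^ 2) y +
          (deriv (deriv σ) y / deriv σ y) *
            ((1 / 2) * deriv (deriv (deriv σ)) y / deriv σ y -
              (3 / 4) * (deriv (deriv σ) y / deriv σ y) ^ 2) -
          (1 / 3) * (deriv (deriv σ) y / deriv σ y) * y + (2 / 3) * m = 0) :=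
  painleveII_iff_schwarzian_form_general U hU m σ h2 h3 h4 hσ'
end

section
/- Let U ⊆ ℝ be an open set, let m̃ ∈ ℝ, and let p̃ : ℝ → ℝ be three times differentiable on U and satisfy the Painlevé-II equation p̃''(y) - 2 p̃(y)³ - (2/3) y p̃(y) + (2/3) m̃ = 0 for all y ∈ U. Assume D(y) := -3 p̃'(y) + 3 p̃(y)² + y ≠ 0 for all y ∈ U. Then the function p(y) = p̃(y) - (2 m̃ + 1)/D(y) satisfies the Painlevé-II equation with parameter m = -1 - m̃, i.e. p''(y) - 2 p(y)³ - (2/3) y p(y) + (2/3)(-1 - m̃) = 0 for all y ∈ U. -/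
/-!
For `D = -3p' + 3p² + x`, the Painlevé-II equation for `p` with parameter `m` is the linear
equation `D' = 2m + 1 - 2pD`. Hence `q = p - (2m + 1)/D` satisfies the Riccati equation
`q' - q² = p' - p²`, so `q` and `p` have the same `D`. Substituting `pD = qD + 2m + 1` gives
`D' = -(2m + 1) - 2qD`, which is the linear form of Painlevé-II for `q` with parameter `-1 - m`.
-/

section Backlund

open Filter Topology

variable {𝕜 : Type*} [NontriviallyNormedField 𝕜] {m x : 𝕜} {p : 𝕜 → 𝕜}

/-- The function `p` is twice differentiable at `x` and solves there the Painlevé-II equation with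
parameter `m`. Differentiability is part of the notion, since `deriv` takes the value `0` where it
fails. -/
structure IsPainleveIIAt (m : 𝕜) (p : 𝕜 → 𝕜) (x : 𝕜) : Prop where
  differentiableAt : DifferentiableAt 𝕜 p x
  differentiableAt_deriv : DifferentiableAt 𝕜 (deriv p) x
  equation : deriv (deriv p) x - 2 * p x ^ 3 - 2 / 3 * x * p x + 2 / 3 * m = 0

/-- The denominator `D` of the Bäcklund transformation of `p`. -/
noncomputable def backlundDenom (p : 𝕜 → 𝕜) (x : 𝕜) : 𝕜 :=
  -3 * deriv p x + 3 * p x ^ 2 + x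

/-- The Bäcklund transformation `p ↦ p - (2m + 1)/D`, which takes the Painlevé-II parameter `m` to
`-1 - m`. -/
noncomputable def backlund (m : 𝕜) (p : 𝕜 → 𝕜) (x : 𝕜) : 𝕜 :=
  p x - (2 * m + 1) / backlundDenom p x

theorem hasDerivAt_backlundDenom (hp : DifferentiableAt 𝕜 p x)
    (hp' : DifferentiableAt 𝕜 (deriv p) x) :
    HasDerivAt (backlundDenom p) (-3 * deriv (deriv p) x + 6 * p x * deriv p x + 1) x := by
  have hD := ((hp'.hasDerivAt.const_mul (-3)).fun_add
    ((hp.hasDerivAt.fun_pow 2).const_mul 3)).fun_add (hasDerivAt_id' x)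
  refine hD.congr_deriv ?_
  push_cast
  ring

theorem isPainleveIIAt_iff_hasDerivAt_backlundDenom [NeZero (3 : 𝕜)]
    (hp : DifferentiableAt 𝕜 p x) (hp' : DifferentiableAt 𝕜 (deriv p) x) :
    IsPainleveIIAt m p x ↔
      HasDerivAt (backlundDenom p) (2 * m + 1 - 2 * p x * backlundDenom p x) x := by
  have three_ne : (3 : 𝕜) ≠ 0 := three_ne_zero
  have hD := hasDerivAt_backlundDenom hp hp'
  have residual : 2 * m + 1 - 2 * p x * backlundDenom p x -
      (-3 * deriv (deriv p) x + 6 * p x * deriv p x + 1) =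
      3 * (deriv (deriv p) x - 2 * p x ^ 3 - 2 / 3 * x * p x + 2 / 3 * m) := by
    rw [backlundDenom]
    field_simp
    ring
  constructor
  · intro h
    rw [h.equation, mul_zero, sub_eq_zero] at residual
    exact hD.congr_deriv residual.symm
  · intro h
    rw [h.unique hD, sub_self] at residual
    exact ⟨hp, hp', (mul_eq_zero.mp residual.symm).resolve_left three_ne⟩

theorem IsPainleveIIAt.hasDerivAt_backlundDenom [NeZero (3 : 𝕜)] (h : IsPainleveIIAt m p x) :
    HasDerivAt (backlundDenom p) (2 * m + 1 - 2 * p x * backlundDenom p x) x :=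
  (isPainleveIIAt_iff_hasDerivAt_backlundDenom h.differentiableAt h.differentiableAt_deriv).mp h

theorem IsPainleveIIAt.hasDerivAt_backlund [NeZero (3 : 𝕜)] (h : IsPainleveIIAt m p x)
    (hD : backlundDenom p x ≠ 0) :
    HasDerivAt (backlund m p) (deriv p x - p x ^ 2 + backlund m p x ^ 2) x := by
  refine (h.differentiableAt.hasDerivAt.fun_sub
    ((hasDerivAt_const x (2 * m + 1)).fun_div h.hasDerivAt_backlundDenom hD)).congr_deriv ?_
  rw [backlund]
  field_simp
  ring

theorem IsPainleveIIAt.backlundDenom_backlund [NeZero (3 : 𝕜)] (h : IsPainleveIIAt m p x)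
    (hD : backlundDenom p x ≠ 0) :
    backlundDenom (backlund m p) x = backlundDenom p x := by
  rw [backlundDenom, (h.hasDerivAt_backlund hD).deriv, backlundDenom]
  ring

theorem differentiableAt_deriv_backlund [NeZero (3 : 𝕜)]
    (h : ∀ᶠ t in 𝓝 x, IsPainleveIIAt m p t) (hD : ∀ᶠ t in 𝓝 x, backlundDenom p t ≠ 0) :
    DifferentiableAt 𝕜 (deriv (backlund m p)) x := by
  have hx := h.self_of_nhds
  have riccati : deriv (backlund m p) =ᶠ[𝓝 x]
      fun t => deriv p t - p t ^ 2 + backlund m p t ^ 2 := by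
    filter_upwards [h, hD] with t ht hDt using (ht.hasDerivAt_backlund hDt).deriv
  have hq := (hx.hasDerivAt_backlund hD.self_of_nhds).differentiableAt
  exact ((hx.differentiableAt_deriv.fun_sub (hx.differentiableAt.fun_pow 2)).fun_add
    (hq.fun_pow 2)).congr_of_eventuallyEq riccati

theorem backlund_neg_general [NeZero (3 : 𝕜)] {U : Set 𝕜} (hU : IsOpen U)
    (hp : ∀ y ∈ U, IsPainleveIIAt m p y) (hD : ∀ y ∈ U, backlundDenom p y ≠ 0) :
    ∀ y ∈ U, IsPainleveIIAt (-1 - m) (backlund m p) y := by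
  intro y hy
  have hp_near : ∀ᶠ t in 𝓝 y, IsPainleveIIAt m p t := eventually_of_mem (hU.mem_nhds hy) hp
  have hD_near : ∀ᶠ t in 𝓝 y, backlundDenom p t ≠ 0 := eventually_of_mem (hU.mem_nhds hy) hD
  have hpy := hp y hy
  have same_denom : backlundDenom (backlund m p) =ᶠ[𝓝 y] backlundDenom p := by
    filter_upwards [hp_near, hD_near] with t ht hDt using ht.backlundDenom_backlund hDt
  have p_mul_denom : p y * backlundDenom p y =
      backlund m p y * backlundDenom p y + (2 * m + 1) := by
    rw [backlund, sub_mul, div_mul_cancel₀ _ (hD y hy), sub_add_cancel]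
  refine (isPainleveIIAt_iff_hasDerivAt_backlundDenom
    (hpy.hasDerivAt_backlund (hD y hy)).differentiableAt
    (differentiableAt_deriv_backlund hp_near hD_near)).mpr ?_
  refine (hpy.hasDerivAt_backlundDenom.congr_of_eventuallyEq same_denom).congr_deriv ?_
  rw [same_denom.self_of_nhds]
  linear_combination -2 * p_mul_denom

end Backlund

/-- Bäcklund transformation: if `p̃` solves Painlevé-II with parameter `m̃` on `U` and
`D = -3p̃' + 3p̃² + y` does not vanish on `U`, then `p = p̃ - (2m̃+1)/D` solves
Painlevé-II with parameter `-1 - m̃` on `U`. -/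
theorem backlund_neg (U : Set ℝ) (hU : IsOpen U) (mt : ℝ) (pt : ℝ → ℝ)
    (h1 : ∀ y ∈ U, DifferentiableAt ℝ pt y)
    (h2 : ∀ y ∈ U, DifferentiableAt ℝ (deriv pt) y)
    (h3 : ∀ y ∈ U, DifferentiableAt ℝ (deriv (deriv pt)) y)
    (hPII : ∀ y ∈ U,
      deriv (deriv pt) y - 2 * (pt y) ^ 3 - (2 / 3) * y * pt y + (2 / 3) * mt = 0)
    (hD : ∀ y ∈ U, -3 * deriv pt y + 3 * (pt y) ^ 2 + y ≠ 0) :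
    ∀ y ∈ U,
      deriv (deriv (fun t => pt t - (2 * mt + 1) / (-3 * deriv pt t + 3 * (pt t) ^ 2 + t))) y -
          2 * (pt y - (2 * mt + 1) / (-3 * deriv pt y + 3 * (pt y) ^ 2 + y)) ^ 3 -
          (2 / 3) * y * (pt y - (2 * mt + 1) / (-3 * deriv pt y + 3 * (pt y) ^ 2 + y)) +
          (2 / 3) * (-1 - mt) = 0 := by
  intro y hy
  have solution_p : ∀ t ∈ U, IsPainleveIIAt mt pt t := fun t ht => ⟨h1 t ht, h2 t ht, hPII t ht⟩
  exact (backlund_neg_general hU solution_p hD y hy).equation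
end

section
/- Let U ⊆ ℝ be an open set, let m̃ ∈ ℝ, and let p̃ : ℝ → ℝ be three times differentiable on U and satisfy the Painlevé-II equation p̃''(y) - 2 p̃(y)³ - (2/3) y p̃(y) + (2/3) m̃ = 0 for all y ∈ U. Assume D(y) := 3 p̃'(y) + 3 p̃(y)² + y ≠ 0 for all y ∈ U. Then the function p(y) = p̃(y) - (2 m̃ - 1)/D(y) satisfies the Painlevé-II equation with parameter m = 1 - m̃, i.e. p''(y) - 2 p(y)³ - (2/3) y p(y) + (2/3)(1 - m̃) = 0 for all y ∈ U. -/
/-!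
In the variables `(p, D)`, `D = 3p' + 3p² + y`, Painlevé-II with parameter `m` becomes the
first-order system `p' = (D - y)/3 - p²`, `D' = 2pD - c` with `c = 2m - 1`. Passing from `p` to
`p - c/D` with `D` unchanged reflects `c` to `-c`: both `p' + p²` and `2pD - c` keep their values.
In terms of the parameter, `c ↦ -c` is `m ↦ 1 - m`.
-/

section Backlund

variable {𝕜 : Type*} [NontriviallyNormedField 𝕜]

/-- `p` is a solution on `U` of the Painlevé-II equation with parameter `m`, in the normalization
`p'' - 2p³ - (2/3)yp + (2/3)m = 0`. The equation is about `deriv`, so the differentiability that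
gives it meaning is part of the notion. -/
structure IsPainleveIIOn (m : 𝕜) (p : 𝕜 → 𝕜) (U : Set 𝕜) : Prop where
  differentiableAt : ∀ y ∈ U, DifferentiableAt 𝕜 p y
  differentiableAt_deriv : ∀ y ∈ U, DifferentiableAt 𝕜 (deriv p) y
  equation : ∀ y ∈ U,
    deriv (deriv p) y - 2 * (p y) ^ 3 - (2 / 3) * y * p y + (2 / 3) * m = 0

/-- `(p, D)` solves on `U` Okamoto's Hamiltonian form of Painlevé-II, a first-order system in which
the Bäcklund transformation acts by a sign change of `c`. Here `c = 2m - 1` for the Painlevé-II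
parameter `m`. -/
structure IsOkamotoOn (c : 𝕜) (p D : 𝕜 → 𝕜) (U : Set 𝕜) : Prop where
  hasDerivAt_position : ∀ y ∈ U, HasDerivAt p ((D y - y) / 3 - p y ^ 2) y
  hasDerivAt_momentum : ∀ y ∈ U, HasDerivAt D (2 * p y * D y - c) y

/-- The momentum `D = 3p' + 3p² + y` conjugate to `p` in Okamoto's system. -/
noncomputable def okamotoMomentum (p : 𝕜 → 𝕜) (y : 𝕜) : 𝕜 :=
  3 * deriv p y + 3 * p y ^ 2 + y

/-- The Bäcklund transform `p - (2m - 1) / D` of a solution `p` of Painlevé-II with parameter `m`;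
it is meaningful only where the momentum `D` does not vanish. -/
noncomputable def backlundTransform (m : 𝕜) (p : 𝕜 → 𝕜) (y : 𝕜) : 𝕜 :=
  p y - (2 * m - 1) / okamotoMomentum p y

variable {m c : 𝕜} {p D : 𝕜 → 𝕜} {U : Set 𝕜}

theorem IsOkamotoOn.reflect (h : IsOkamotoOn c p D U) (hD : ∀ y ∈ U, D y ≠ 0) :
    IsOkamotoOn (-c) (fun y => p y - c / D y) D U where
  hasDerivAt_position y hy := by
    have hDy := hD y hy
    have hquot : HasDerivAt (fun t => c / D t) (-(c * (2 * p y * D y - c)) / D y ^ 2) y := by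
      simpa using (hasDerivAt_const y c).fun_div (h.hasDerivAt_momentum y hy) hDy
    refine ((h.hasDerivAt_position y hy).fun_sub hquot).congr_deriv ?_
    have complete_square :
        -(p y ^ 2) - -(c * (2 * p y * D y - c)) / D y ^ 2 = -(p y - c / D y) ^ 2 := by
      field_simp
      ring
    linear_combination complete_square
  hasDerivAt_momentum y hy := by
    refine (h.hasDerivAt_momentum y hy).congr_deriv ?_
    linear_combination 2 * div_mul_cancel₀ c (hD y hy)

variable [NeZero (3 : 𝕜)]

theorem IsPainleveIIOn.isOkamotoOn (h : IsPainleveIIOn m p U) :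
    IsOkamotoOn (2 * m - 1) p (okamotoMomentum p) U where
  hasDerivAt_position y hy := by
    refine (h.differentiableAt y hy).hasDerivAt.congr_deriv ?_
    unfold okamotoMomentum
    field_simp
    ring
  hasDerivAt_momentum y hy := by
    have hp := (h.differentiableAt y hy).hasDerivAt
    have hp' := (h.differentiableAt_deriv y hy).hasDerivAt
    refine (((hp'.const_mul 3).fun_add ((hp.fun_pow 2).const_mul 3)).fun_add
      (hasDerivAt_id' y)).congr_deriv ?_
    have three_mul_equation :
        3 * deriv (deriv p) y = 6 * p y ^ 3 + 2 * y * p y - 2 * m := by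
      have three_div : (3 : 𝕜) * (2 / 3) = 2 := mul_div_cancel₀ 2 (NeZero.ne 3)
      linear_combination 3 * h.equation y hy + (y * p y - m) * three_div
    unfold okamotoMomentum
    push_cast
    linear_combination three_mul_equation

theorem IsOkamotoOn.isPainleveIIOn (hU : IsOpen U) (h : IsOkamotoOn (2 * m - 1) p D U) :
    IsPainleveIIOn m p U := by
  have hasDerivAt_deriv : ∀ y ∈ U,
      HasDerivAt (deriv p) (2 * p y ^ 3 + 2 / 3 * y * p y - 2 / 3 * m) y := by
    intro y hy
    have hderiv : deriv p =ᶠ[nhds y] fun t => (D t - t) / 3 - p t ^ 2 := by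
      filter_upwards [hU.mem_nhds hy] with t ht using (h.hasDerivAt_position t ht).deriv
    refine HasDerivAt.congr_of_eventuallyEq ?_ hderiv
    refine ((((h.hasDerivAt_momentum y hy).fun_sub (hasDerivAt_id' y)).div_const 3).fun_sub
      ((h.hasDerivAt_position y hy).fun_pow 2)).congr_deriv ?_
    field_simp
    push_cast
    ring
  exact
    { differentiableAt := fun y hy => (h.hasDerivAt_position y hy).differentiableAt
      differentiableAt_deriv := fun y hy => (hasDerivAt_deriv y hy).differentiableAt
      equation := fun y hy => by
        rw [(hasDerivAt_deriv y hy).deriv]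
        ring }

theorem backlund_pos_general (hU : IsOpen U) (hp : IsPainleveIIOn m p U)
    (hD : ∀ y ∈ U, okamotoMomentum p y ≠ 0) :
    IsPainleveIIOn (1 - m) (backlundTransform m p) U := by
  have hreflect := hp.isOkamotoOn.reflect hD
  rw [show -(2 * m - 1) = 2 * (1 - m) - 1 by ring] at hreflect
  exact hreflect.isPainleveIIOn hU

end Backlund

/-- Bäcklund transformation: if `p̃` solves Painlevé-II with parameter `m̃` on `U` and
`D = 3p̃' + 3p̃² + y` does not vanish on `U`, then `p = p̃ - (2m̃-1)/D` solves
Painlevé-II with parameter `1 - m̃` on `U`. -/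
theorem backlund_pos (U : Set ℝ) (hU : IsOpen U) (mt : ℝ) (pt : ℝ → ℝ)
    (h1 : ∀ y ∈ U, DifferentiableAt ℝ pt y)
    (h2 : ∀ y ∈ U, DifferentiableAt ℝ (deriv pt) y)
    (h3 : ∀ y ∈ U, DifferentiableAt ℝ (deriv (deriv pt)) y)
    (hPII : ∀ y ∈ U,
      deriv (deriv pt) y - 2 * (pt y) ^ 3 - (2 / 3) * y * pt y + (2 / 3) * mt = 0)
    (hD : ∀ y ∈ U, 3 * deriv pt y + 3 * (pt y) ^ 2 + y ≠ 0) :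
    ∀ y ∈ U,
      deriv (deriv (fun t => pt t - (2 * mt - 1) / (3 * deriv pt t + 3 * (pt t) ^ 2 + t))) y -
          2 * (pt y - (2 * mt - 1) / (3 * deriv pt y + 3 * (pt y) ^ 2 + y)) ^ 3 -
          (2 / 3) * y * (pt y - (2 * mt - 1) / (3 * deriv pt y + 3 * (pt y) ^ 2 + y)) +
          (2 / 3) * (1 - mt) = 0 := by
  have hpt : IsPainleveIIOn mt pt U := ⟨h1, h2, hPII⟩
  exact (backlund_pos_general hU hpt hD).equation
end

section
/- For every integer m there exist real polynomials P and Q with Q not identically zero such that the rational function p(y) = P(y)/Q(y) satisfies the Painlevé-II equation with parameter m, i.e. p''(y) - 2 p(y)³ - (2/3) y p(y) + (2/3) m = 0 at every y ∈ ℝ with Q(y) ≠ 0. -/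
/-!
A solution `p` of `p'' = 2 p³ + 2 c y p - 2 c m` is the position in the Hamiltonian system
`p' = f - p² - c y`, `f' = 2 p f + b` with `b = c (1 - 2 m)`. This system has two birational
symmetries, `(p, f) ↦ (p + b / f, f)` and `(p, f) ↦ (-p, 2 p² + 2 c y - f)`, which change `b` into
`-b` and `2 c - b`, that is, `m` into `1 - m` and `-m`. The two reflections of the parameter
generate the translations of `ℤ`, so every integer is reached from the solution `p = 0`, `f = c y`
at `m = 0`. The first symmetry is undefined only when `f` vanishes identically; this forces `b = 0`,
so that `m` and `1 - m` give the same system.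
-/

open Filter Polynomial Topology

namespace PainleveII

variable {𝕜 : Type*} [NontriviallyNormedField 𝕜] {b c y : 𝕜}

/-- Okamoto's Hamiltonian system for Painlevé II at the point `y`, with Hamiltonian
`f² / 2 - (p² + c y) f - b p`. It is stated pointwise because the solutions of interest have
poles. -/
structure IsHamiltonianSolutionAt (c b : 𝕜) (p f : 𝕜 → 𝕜) (y : 𝕜) : Prop where
  hasDerivAt_position : HasDerivAt p (f y - p y ^ 2 - c * y) y
  hasDerivAt_momentum : HasDerivAt f (2 * p y * f y + b) y

namespace IsHamiltonianSolutionAt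

variable {p f p₁ f₁ : 𝕜 → 𝕜}

theorem congr_of_eventuallyEq (h : IsHamiltonianSolutionAt c b p f y) (hp : p₁ =ᶠ[𝓝 y] p)
    (hf : f₁ =ᶠ[𝓝 y] f) : IsHamiltonianSolutionAt c b p₁ f₁ y where
  hasDerivAt_position := by
    simpa only [hp.eq_of_nhds, hf.eq_of_nhds] using h.hasDerivAt_position.congr_of_eventuallyEq hp
  hasDerivAt_momentum := by
    simpa only [hp.eq_of_nhds, hf.eq_of_nhds] using h.hasDerivAt_momentum.congr_of_eventuallyEq hf

theorem add_div_momentum (h : IsHamiltonianSolutionAt c b p f y) (hf : f y ≠ 0) :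
    IsHamiltonianSolutionAt c (-b) (fun t ↦ p t + b / f t) f y where
  hasDerivAt_position := by
    refine (h.hasDerivAt_position.add
      ((hasDerivAt_const y b).div h.hasDerivAt_momentum hf)).congr_deriv ?_
    field_simp
    ring
  hasDerivAt_momentum := by
    refine h.hasDerivAt_momentum.congr_deriv ?_
    field_simp
    ring

theorem neg_position (h : IsHamiltonianSolutionAt c b p f y) :
    IsHamiltonianSolutionAt c (2 * c - b) (fun t ↦ -p t)
      (fun t ↦ 2 * p t ^ 2 + 2 * c * t - f t) y where
  hasDerivAt_position := h.hasDerivAt_position.neg.congr_deriv (by ring)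
  hasDerivAt_momentum := by
    refine ((((h.hasDerivAt_position.pow 2).const_mul 2).add
      ((hasDerivAt_id y).const_mul (2 * c))).sub h.hasDerivAt_momentum).congr_deriv ?_
    push_cast
    ring

theorem deriv_deriv_position (h : ∀ᶠ t in 𝓝 y, IsHamiltonianSolutionAt c b p f t) :
    deriv (deriv p) y = 2 * p y ^ 3 + 2 * c * y * p y + (b - c) := by
  have deriv_position : deriv p =ᶠ[𝓝 y] fun t ↦ f t - p t ^ 2 - c * t :=
    h.mono fun t ht ↦ ht.hasDerivAt_position.deriv
  obtain ⟨hp, hf⟩ := h.self_of_nhds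
  rw [deriv_position.deriv_eq,
    ((hf.fun_sub (hp.fun_pow 2)).fun_sub ((hasDerivAt_id' y).const_mul c)).deriv]
  push_cast
  ring

end IsHamiltonianSolutionAt

/-- The pair `(P / Q, F / Q)` of rational functions solves the Hamiltonian system with constants
`c` and `b`. The denominator is shared, and need not be reduced, so that a symmetry of the system
may enlarge it by the points at which the symmetry is undefined. -/
structure IsRationalSolution (c b : 𝕜) (P F Q : 𝕜[X]) : Prop where
  denom_ne_zero : Q ≠ 0
  isHamiltonianSolutionAt : ∀ ⦃y : 𝕜⦄, Q.eval y ≠ 0 →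
    IsHamiltonianSolutionAt c b (fun t ↦ P.eval t / Q.eval t) (fun t ↦ F.eval t / Q.eval t) y

theorem eventually_eval_ne_zero {Q : 𝕜[X]} (hy : Q.eval y ≠ 0) : ∀ᶠ t in 𝓝 y, Q.eval t ≠ 0 :=
  Q.continuous.continuousAt.eventually_ne hy

theorem isRationalSolution_zero (c : 𝕜) : IsRationalSolution c c 0 (C c * X) 1 where
  denom_ne_zero := one_ne_zero
  isHamiltonianSolutionAt y _ :=
    { hasDerivAt_position := by simpa using hasDerivAt_const y (0 : 𝕜)
      hasDerivAt_momentum := by simpa using (hasDerivAt_id' y).const_mul c }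

namespace IsRationalSolution

variable {P F Q : 𝕜[X]}

theorem momentum_ne_zero (h : IsRationalSolution c b P F Q) (hb : b ≠ 0) : F ≠ 0 := by
  rintro rfl
  obtain ⟨y, hy⟩ : ∃ y, Q.eval y ≠ 0 := by
    by_contra! hQ
    exact h.denom_ne_zero (Polynomial.funext (by simpa using hQ))
  have hasDerivAt_zero : HasDerivAt (fun _ ↦ (0 : 𝕜)) b y := by
    simpa using (h.isHamiltonianSolutionAt hy).hasDerivAt_momentum
  exact hb (hasDerivAt_zero.unique (hasDerivAt_const y 0))

theorem add_div_momentum (h : IsRationalSolution c b P F Q) (hF : F ≠ 0) :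
    IsRationalSolution c (-b) (P * F + C b * Q ^ 2) (F ^ 2) (Q * F) where
  denom_ne_zero := mul_ne_zero h.denom_ne_zero hF
  isHamiltonianSolutionAt y hy := by
    have hQF : ∀ᶠ t in 𝓝 y, Q.eval t ≠ 0 ∧ F.eval t ≠ 0 := by
      simpa only [eval_mul, mul_ne_zero_iff] using eventually_eval_ne_zero hy
    obtain ⟨hQy, hFy⟩ := hQF.self_of_nhds
    refine ((h.isHamiltonianSolutionAt hQy).add_div_momentum
      (div_ne_zero hFy hQy)).congr_of_eventuallyEq ?_ ?_ <;>
    · filter_upwards [hQF] with t ⟨hQt, hFt⟩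
      simp only [eval_add, eval_mul, eval_pow, eval_C]
      field_simp

theorem neg_position (h : IsRationalSolution c b P F Q) :
    IsRationalSolution c (2 * c - b) (-(P * Q)) (2 * P ^ 2 + C (2 * c) * X * Q ^ 2 - F * Q)
      (Q ^ 2) where
  denom_ne_zero := pow_ne_zero 2 h.denom_ne_zero
  isHamiltonianSolutionAt y hy := by
    have hQy : Q.eval y ≠ 0 := by simpa using hy
    refine (h.isHamiltonianSolutionAt hQy).neg_position.congr_of_eventuallyEq ?_ ?_ <;>
    · filter_upwards [eventually_eval_ne_zero hQy] with t hQt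
      simp only [eval_add, eval_sub, eval_neg, eval_mul, eval_pow, eval_C, eval_X, eval_ofNat]
      field_simp

theorem deriv_deriv_position (h : IsRationalSolution c b P F Q) (hy : Q.eval y ≠ 0) :
    deriv (deriv fun t ↦ P.eval t / Q.eval t) y =
      2 * (P.eval y / Q.eval y) ^ 3 + 2 * c * y * (P.eval y / Q.eval y) + (b - c) :=
  IsHamiltonianSolutionAt.deriv_deriv_position
    ((eventually_eval_ne_zero hy).mono h.isHamiltonianSolutionAt)

theorem exists_neg_parameter (h : IsRationalSolution c b P F Q) :
    ∃ P₁ F₁ Q₁ : 𝕜[X], IsRationalSolution c (-b) P₁ F₁ Q₁ := by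
  obtain rfl | hb := eq_or_ne b 0
  · exact ⟨P, F, Q, by simpa only [neg_zero] using h⟩
  · exact ⟨_, _, _, h.add_div_momentum (h.momentum_ne_zero hb)⟩

end IsRationalSolution

theorem exists_isRationalSolution (c : 𝕜) (m : ℤ) :
    ∃ P F Q : 𝕜[X], IsRationalSolution c (c * (1 - 2 * m)) P F Q := by
  induction m with
  | zero => exact ⟨_, _, _, by simpa using isRationalSolution_zero c⟩
  | succ n ih =>
    obtain ⟨P, F, Q, h⟩ := ih
    have parameter_succ : c * (1 - 2 * ((n + 1 : ℤ) : 𝕜)) = -(2 * c - c * (1 - 2 * (n : ℤ))) := by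
      push_cast
      ring
    simpa only [parameter_succ] using h.neg_position.exists_neg_parameter
  | pred n ih =>
    obtain ⟨P, F, Q, h⟩ := ih
    obtain ⟨P₁, F₁, Q₁, h₁⟩ := h.exists_neg_parameter
    have parameter_pred :
        c * (1 - 2 * ((-n - 1 : ℤ) : 𝕜)) = 2 * c - -(c * (1 - 2 * (-n : ℤ))) := by
      push_cast
      ring
    exact ⟨_, _, _, by simpa only [parameter_pred] using h₁.neg_position⟩

end PainleveII

/-- The choice `c = 1 / 2` gives the standard normalization `p'' = 2 p³ + y p - m`. -/
theorem painleveII_exists_rational_solution_general {𝕜 : Type*} [NontriviallyNormedField 𝕜]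
    (c : 𝕜) (m : ℤ) :
    ∃ P Q : Polynomial 𝕜, Q ≠ 0 ∧
      ∀ y : 𝕜, Q.eval y ≠ 0 →
        deriv (deriv (fun t => P.eval t / Q.eval t)) y -
            2 * (P.eval y / Q.eval y) ^ 3 - 2 * c * y * (P.eval y / Q.eval y) +
            2 * c * (m : 𝕜) = 0 := by
  obtain ⟨P, F, Q, h⟩ := PainleveII.exists_isRationalSolution c m
  refine ⟨P, Q, h.denom_ne_zero, fun y hy ↦ ?_⟩
  rw [h.deriv_deriv_position hy]
  ring

/-- For every integer `m` the Painlevé-II equation with parameter `m` has a rational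
solution `p = P/Q` with `P`, `Q` real polynomials, `Q` not identically zero. -/
theorem painleveII_exists_rational_solution (m : ℤ) :
    ∃ P Q : Polynomial ℝ, Q ≠ 0 ∧
      ∀ y : ℝ, Q.eval y ≠ 0 →
        deriv (deriv (fun t => P.eval t / Q.eval t)) y -
            2 * (P.eval y / Q.eval y) ^ 3 - (2 / 3) * y * (P.eval y / Q.eval y) +
            (2 / 3) * (m : ℝ) = 0 := by
  simpa only [mul_one_div] using painleveII_exists_rational_solution_general (1 / 3 : ℝ) m
end

section
/- Let m ∈ ℝ and let P, Q be real polynomials with Q not identically zero such that p(y) = P(y)/Q(y) satisfies the Painlevé-II equation p''(y) - 2 p(y)³ - (2/3) y p(y) + (2/3) m = 0 at every y ∈ ℝ with Q(y) ≠ 0. Then y · p(y) → m as y → +∞ (i.e. the function y ↦ y · P(y)/Q(y) tends to m along the filter at infinity). -/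
/-!
A derivative of a rational function `p` is `O(p)` at `+∞`, because differentiating the quotient
`P/Q` does not raise the degree. In `p'' = a p³ + b y p - b m` with `a ≥ 0` and `b > 0`, the two
terms `a p³` and `b y p` have the same sign for `y > 0` and so cannot cancel, while
`p'' = O(p) = o(y p)`. Hence `y p` is dominated by the constant `b m`: it is bounded, so that `p`,
and with it `p''` and `p³`, tends to `0`, and the equation becomes `b y p → b m`.
-/

open Filter Asymptotics Polynomial Topology

/-- The numerator `P' Q - P Q'` of the derivative of `P / Q` over the denominator `Q ^ 2`. -/
noncomputable def derivNumerator {R : Type*} [CommRing R] (P Q : R[X]) : R[X] :=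
  derivative P * Q - P * derivative Q

theorem degree_derivNumerator_le {R : Type*} [CommRing R] [NoZeroDivisors R] (P Q : R[X]) :
    (derivNumerator P Q).degree ≤ (P * Q).degree := by
  refine (degree_sub_le _ _).trans (max_le ?_ ?_) <;> rw [degree_mul, degree_mul] <;> gcongr <;>
    exact degree_derivative_le

theorem deriv_eval_div_eval {K : Type*} [NontriviallyNormedField K] (P Q : K[X]) {y : K}
    (hy : Q.eval y ≠ 0) :
    deriv (fun t => P.eval t / Q.eval t) y = (derivNumerator P Q).eval y / (Q ^ 2).eval y := by
  rw [((P.hasDerivAt y).fun_div (Q.hasDerivAt y) hy).deriv]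
  simp [derivNumerator]

section RationalGerms

variable {𝕜 : Type*} [NontriviallyNormedField 𝕜] [LinearOrder 𝕜] [IsStrictOrderedRing 𝕜]

/-- The germ of `f` at `+∞` is that of a rational function. Working with germs makes the notion
insensitive to the values of `f` at the poles, and closed under `deriv`. -/
def IsRationalAtTop (f : 𝕜 → 𝕜) : Prop :=
  ∃ P Q : 𝕜[X], Q ≠ 0 ∧ f =ᶠ[atTop] fun y => P.eval y / Q.eval y

theorem deriv_eval_div_eval_eventuallyEq (P : 𝕜[X]) {Q : 𝕜[X]} (hQ : Q ≠ 0) :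
    deriv (fun t => P.eval t / Q.eval t) =ᶠ[atTop]
      fun y => (derivNumerator P Q).eval y / (Q ^ 2).eval y :=
  (Q.eventually_atTop_not_isRoot hQ).mono fun _ => deriv_eval_div_eval P Q

variable [OrderTopology 𝕜]

theorem derivNumerator_div_sq_isBigO (P : 𝕜[X]) {Q : 𝕜[X]} (hQ : Q ≠ 0) :
    (fun y => (derivNumerator P Q).eval y / (Q ^ 2).eval y) =O[atTop]
      fun y => P.eval y / Q.eval y := by
  have hcancel : (fun y => (P * Q).eval y / (Q ^ 2).eval y) =ᶠ[atTop]
      fun y => P.eval y / Q.eval y := by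
    filter_upwards [Q.eventually_atTop_not_isRoot hQ] with y hy
    rw [eval_mul, eval_pow, sq, mul_div_mul_right _ _ hy]
  have hnum : (fun y => (derivNumerator P Q).eval y) =O[atTop] fun y => (P * Q).eval y :=
    isBigO_atTop_of_degree_le _ _ (degree_derivNumerator_le P Q)
  calc (fun y => (derivNumerator P Q).eval y / (Q ^ 2).eval y)
      =O[atTop] fun y => (P * Q).eval y / (Q ^ 2).eval y := by
        simpa only [div_eq_mul_inv] using hnum.mul (isBigO_refl _ atTop)
    _ =ᶠ[atTop] fun y => P.eval y / Q.eval y := hcancel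

theorem eventuallyEq_deriv_atTop {F : Type*} [NormedAddCommGroup F] [NormedSpace 𝕜 F]
    {f g : 𝕜 → F} (h : f =ᶠ[atTop] g) : deriv f =ᶠ[atTop] deriv g := by
  obtain ⟨a, ha⟩ := eventually_atTop.1 h
  filter_upwards [eventually_gt_atTop a] with y hy
  exact EventuallyEq.deriv_eq ((eventually_gt_nhds hy).mono fun t ht => ha t ht.le)

namespace IsRationalAtTop

variable {f : 𝕜 → 𝕜}

protected theorem deriv (hf : IsRationalAtTop f) : IsRationalAtTop (deriv f) := by
  obtain ⟨P, Q, hQ, hfPQ⟩ := hf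
  exact ⟨derivNumerator P Q, Q ^ 2, pow_ne_zero 2 hQ,
    (eventuallyEq_deriv_atTop hfPQ).trans (deriv_eval_div_eval_eventuallyEq P hQ)⟩

theorem deriv_isBigO (hf : IsRationalAtTop f) : deriv f =O[atTop] f := by
  obtain ⟨P, Q, hQ, hfPQ⟩ := hf
  calc deriv f
      =ᶠ[atTop] deriv fun y => P.eval y / Q.eval y := eventuallyEq_deriv_atTop hfPQ
    _ =ᶠ[atTop] fun y => (derivNumerator P Q).eval y / (Q ^ 2).eval y :=
      deriv_eval_div_eval_eventuallyEq P hQ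
    _ =O[atTop] fun y => P.eval y / Q.eval y := derivNumerator_div_sq_isBigO P hQ
    _ =ᶠ[atTop] f := hfPQ.symm

theorem iterate_deriv_isBigO (hf : IsRationalAtTop f) (n : ℕ) :
    deriv^[n] f =O[atTop] f := by
  induction n generalizing f with
  | zero => exact isBigO_refl f atTop
  | succ n ih => exact (ih hf.deriv).trans hf.deriv_isBigO

end IsRationalAtTop

end RationalGerms

section CubicBalance

variable {α : Type*} {l : Filter α} {a c : ℝ} {p q w : α → ℝ}

theorem mul_isBigO_cubic_add_mul (ha : 0 ≤ a) (hw : ∀ᶠ x in l, 0 ≤ w x) :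
    (fun x => w x * p x) =O[l] fun x => a * p x ^ 3 + w x * p x := by
  refine IsBigO.of_bound' (hw.mono fun x hx => ?_)
  have hcoeff : w x ≤ a * p x ^ 2 + w x := le_add_of_nonneg_left (by positivity)
  calc ‖w x * p x‖ = w x * ‖p x‖ := by rw [norm_mul, Real.norm_of_nonneg hx]
    _ ≤ (a * p x ^ 2 + w x) * ‖p x‖ := by gcongr
    _ = ‖(a * p x ^ 2 + w x) * p x‖ := by
      rw [norm_mul, Real.norm_of_nonneg (hx.trans hcoeff)]
    _ = ‖a * p x ^ 3 + w x * p x‖ := by ring_nf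

theorem isLittleO_mul_of_tendsto_atTop (hw : Tendsto w l atTop) :
    p =o[l] fun x => w x * p x := by
  have hone : (fun _ => (1 : ℝ)) =o[l] w :=
    (isLittleO_const_left_of_ne one_ne_zero).2 (tendsto_norm_atTop_atTop.comp hw)
  simpa only [one_mul] using hone.mul_isBigO (isBigO_refl p l)

theorem mul_isBigO_one_of_cubic_balance (ha : 0 ≤ a) (hw : Tendsto w l atTop) (hq : q =O[l] p)
    (heq : ∀ᶠ x in l, q x = a * p x ^ 3 + w x * p x - c) :
    (fun x => w x * p x) =O[l] fun _ => (1 : ℝ) := by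
  let u : α → ℝ := fun x => a * p x ^ 3 + w x * p x
  have hwu : (fun x => w x * p x) =O[l] u :=
    mul_isBigO_cubic_add_mul ha (hw.eventually_ge_atTop 0)
  have hqu : q =o[l] u :=
    (hq.trans_isLittleO (isLittleO_mul_of_tendsto_atTop hw)).trans_isBigO hwu
  have hconst : (fun x => u x - q x) =ᶠ[l] fun _ => c :=
    heq.mono fun x hx => by simp only [u, hx]; ring
  exact (hwu.trans (hqu.right_isBigO_sub.trans_eventuallyEq hconst)).trans
    (isBigO_const_const c one_ne_zero l)

theorem tendsto_mul_of_cubic_balance (ha : 0 ≤ a) (hw : Tendsto w l atTop) (hq : q =O[l] p)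
    (heq : ∀ᶠ x in l, q x = a * p x ^ 3 + w x * p x - c) :
    Tendsto (fun x => w x * p x) l (𝓝 c) := by
  have hp : Tendsto p l (𝓝 0) :=
    (isLittleO_one_iff ℝ).1 <| (isLittleO_mul_of_tendsto_atTop hw).trans_isBigO
      (mul_isBigO_one_of_cubic_balance ha hw hq heq)
  have hlim : Tendsto (fun x => c + q x - a * p x ^ 3) l (𝓝 c) := by
    simpa using ((hq.trans_tendsto hp).const_add c).sub ((hp.pow 3).const_mul a)
  exact hlim.congr' (heq.mono fun x hx => by rw [hx]; ring)

end CubicBalance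

theorem painleveII_rational_asymptotics_general {a b m : ℝ} (ha : 0 ≤ a) (hb : 0 < b)
    {p : ℝ → ℝ} (hp : IsRationalAtTop p)
    (h : ∀ᶠ y in atTop, deriv (deriv p) y - a * p y ^ 3 - b * y * p y + b * m = 0) :
    Tendsto (fun y => y * p y) atTop (𝓝 m) := by
  have heq : ∀ᶠ y in atTop, deriv^[2] p y = a * p y ^ 3 + b * y * p y - b * m :=
    h.mono fun y hy => by
      rw [Function.iterate_succ_apply, Function.iterate_one]
      linarith
  have hscaled : Tendsto (fun y => b * y * p y) atTop (𝓝 (b * m)) :=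
    tendsto_mul_of_cubic_balance ha (tendsto_id.const_mul_atTop hb) (hp.iterate_deriv_isBigO 2) heq
  simpa only [mul_assoc, inv_mul_cancel_left₀ hb.ne'] using hscaled.const_mul b⁻¹

/-- If `p = P/Q` is a rational solution of the Painlevé-II equation with parameter `m`,
then `y · p(y) → m` as `y → +∞`. -/
theorem painleveII_rational_asymptotics (m : ℝ) (P Q : Polynomial ℝ) (hQ : Q ≠ 0)
    (h : ∀ y : ℝ, Q.eval y ≠ 0 →
      deriv (deriv (fun t => P.eval t / Q.eval t)) y -
          2 * (P.eval y / Q.eval y) ^ 3 - (2 / 3) * y * (P.eval y / Q.eval y) +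
          (2 / 3) * m = 0) :
    Filter.Tendsto (fun y : ℝ => y * (P.eval y / Q.eval y)) Filter.atTop (nhds m) :=
  painleveII_rational_asymptotics_general zero_le_two (by norm_num) ⟨P, Q, hQ, EventuallyEq.rfl⟩
    ((Q.eventually_atTop_not_isRoot hQ).mono h)
end

section
/- Let n ≥ 1 and let x, y : Fin n → ℝ be injective functions such that x(i) + y(j) ≠ 0 for all i, j. Define the Cauchy matrix C : Matrix (Fin n) (Fin n) ℝ by C(i,j) = 1/(x(i) + y(j)). Then C is invertible and the sum of all entries of C⁻¹ equals (∑ᵢ x(i)) + (∑ⱼ y(j)). -/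
/-!
Write `C` for the Cauchy matrix, `X = diag x`, `Y = diag y`, and `J` for the all-ones matrix.
Since `x i * C i j + C i j * y j = 1`, we have `X * C + C * Y = J`, hence
`C⁻¹ * J = C⁻¹ * X * C + Y`. The trace of the left side is the sum of all entries of `C⁻¹`, and
that of the right side is `tr X + tr Y`.

For invertibility, the barycentric form of Lagrange interpolation at the nodes `-y j` says that, up
to nonzero factors, `C` sends the values of a polynomial of degree less than `n` at the nodes `-y j`
to its values at the points `x i`. Such a polynomial vanishes if its values at the `x i` do.
-/

section RankOneDisplacement

open Matrix

variable {ι R : Type*} [Fintype ι] [DecidableEq ι] [CommRing R]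

theorem dotProduct_inv_mulVec_of_mul_add_mul_eq_vecMulVec {A P Q : Matrix ι ι R} {a b : ι → R}
    (hA : IsUnit A) (h : P * A + A * Q = vecMulVec a b) :
    (A⁻¹ *ᵥ a) ⬝ᵥ b = P.trace + Q.trace := by
  have hdet : IsUnit A.det := (isUnit_iff_isUnit_det A).mp hA
  calc (A⁻¹ *ᵥ a) ⬝ᵥ b = (A⁻¹ * vecMulVec a b).trace := by
        rw [mul_vecMulVec, trace_vecMulVec]
    _ = (A⁻¹ * P * A + A⁻¹ * (A * Q)).trace := by rw [← h, mul_add, mul_assoc]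
    _ = P.trace + Q.trace := by
        rw [trace_add, trace_mul_cycle, mul_nonsing_inv A hdet, one_mul,
          nonsing_inv_mul_cancel_left A Q hdet]

end RankOneDisplacement

section CauchyMatrix

open Finset Lagrange Matrix

variable {m n K : Type*} [Field K]

/-- The (possibly rectangular) Cauchy matrix `C i j = 1 / (x i + y j)`, in the sign convention where
`-y j` are the poles; an entry with `x i + y j = 0` is `0`. -/
def cauchyMatrix (x : m → K) (y : n → K) : Matrix m n K :=
  of fun i j => 1 / (x i + y j)

variable {x : m → K} {y : n → K}

theorem diagonal_mul_cauchyMatrix_add_cauchyMatrix_mul_diagonal [Fintype m] [DecidableEq m]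
    [Fintype n] [DecidableEq n] (hxy : ∀ i j, x i + y j ≠ 0) :
    diagonal x * cauchyMatrix x y + cauchyMatrix x y * diagonal y = vecMulVec 1 1 := by
  ext i j
  have := hxy i j
  simp only [cauchyMatrix, Matrix.add_apply, diagonal_mul, mul_diagonal, of_apply, vecMulVec_apply,
    Pi.one_apply]
  field_simp

theorem eval_interpolate_neg_eq_cauchyMatrix_mulVec [Fintype n] [DecidableEq n]
    (hxy : ∀ i j, x i + y j ≠ 0) (r : n → K) (i : m) :
    (interpolate univ (-y) r).eval (x i) =
      (nodal univ (-y)).eval (x i) * (cauchyMatrix x y *ᵥ (nodalWeight univ (-y) * r)) i := by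
  have hnode : ∀ j ∈ univ, x i ≠ (-y) j := fun j _ h => hxy i j (eq_neg_iff_add_eq_zero.mp h)
  rw [eval_interpolate_not_at_node r hnode]
  congr 1
  refine sum_congr rfl fun j _ => ?_
  simp only [cauchyMatrix, of_apply, Pi.mul_apply, Pi.neg_apply, sub_neg_eq_add]
  ring

theorem eq_zero_of_cauchyMatrix_mulVec_eq_zero [Fintype m] [Fintype n]
    (hcard : Fintype.card n ≤ Fintype.card m) (hx : x.Injective) (hy : y.Injective)
    (hxy : ∀ i j, x i + y j ≠ 0) {u : n → K} (hu : cauchyMatrix x y *ᵥ u = 0) : u = 0 := by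
  classical
  have hnodes : Set.InjOn (-y) (univ : Finset n) := (neg_injective.comp hy).injOn
  have hweight (j : n) : nodalWeight univ (-y) j ≠ 0 := nodalWeight_ne_zero hnodes (mem_univ j)
  let r : n → K := u / nodalWeight univ (-y)
  have hr : nodalWeight univ (-y) * r = u := funext fun j => mul_div_cancel₀ (u j) (hweight j)
  have hdegree : (interpolate univ (-y) r).degree < #(univ : Finset m) :=
    (degree_interpolate_lt r hnodes).trans_le (mod_cast hcard)
  have hinterpolate : interpolate univ (-y) r = 0 := by
    refine Polynomial.eq_zero_of_degree_lt_of_eval_index_eq_zero univ hx.injOn hdegree fun i _ => ?_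
    rw [eval_interpolate_neg_eq_cauchyMatrix_mulVec hxy, hr, hu, Pi.zero_apply, mul_zero]
  have hr_zero : r = 0 := funext fun j => by
    rw [← eval_interpolate_at_node r hnodes (mem_univ j), hinterpolate, Polynomial.eval_zero,
      Pi.zero_apply]
  rw [← hr, hr_zero, mul_zero]

end CauchyMatrix

section Square

open Matrix

variable {ι K : Type*} [Fintype ι] [DecidableEq ι] [Field K] {x y : ι → K}

theorem isUnit_cauchyMatrix (hx : x.Injective) (hy : y.Injective) (hxy : ∀ i j, x i + y j ≠ 0) :
    IsUnit (cauchyMatrix x y) := by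
  rw [← mulVec_injective_iff_isUnit]
  exact (injective_iff_map_eq_zero (cauchyMatrix x y).mulVecLin).mpr fun _ =>
    eq_zero_of_cauchyMatrix_mulVec_eq_zero le_rfl hx hy hxy

theorem cauchy_matrix_inverse_entry_sum_general (hx : x.Injective) (hy : y.Injective)
    (hxy : ∀ i j, x i + y j ≠ 0) :
    IsUnit (cauchyMatrix x y) ∧
      ∑ i, ∑ j, (cauchyMatrix x y)⁻¹ i j = ∑ i, x i + ∑ j, y j := by
  have hunit := isUnit_cauchyMatrix hx hy hxy
  refine ⟨hunit, ?_⟩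
  calc ∑ i, ∑ j, (cauchyMatrix x y)⁻¹ i j = ((cauchyMatrix x y)⁻¹ *ᵥ 1) ⬝ᵥ 1 := by
        simp only [dotProduct_one, mulVec]
    _ = (diagonal x).trace + (diagonal y).trace :=
        dotProduct_inv_mulVec_of_mul_add_mul_eq_vecMulVec hunit
          (diagonal_mul_cauchyMatrix_add_cauchyMatrix_mul_diagonal hxy)
    _ = ∑ i, x i + ∑ j, y j := by rw [trace_diagonal, trace_diagonal]

end Square

/-- A Cauchy matrix `C(i,j) = 1/(x i + y j)` with `x`, `y` injective and all pairwise
sums nonzero is invertible, and the sum of all entries of its inverse equals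
`∑ x i + ∑ y j`. -/
theorem cauchy_matrix_inverse_entry_sum (n : ℕ) (hn : 1 ≤ n) (x y : Fin n → ℝ)
    (hx : Function.Injective x) (hy : Function.Injective y)
    (hxy : ∀ i j, x i + y j ≠ 0) :
    IsUnit (Matrix.of (fun i j => 1 / (x i + y j)) : Matrix (Fin n) (Fin n) ℝ) ∧
      ∑ i, ∑ j, (Matrix.of (fun i j => 1 / (x i + y j)) : Matrix (Fin n) (Fin n) ℝ)⁻¹ i j =
        (∑ i, x i) + (∑ j, y j) :=
  cauchy_matrix_inverse_entry_sum_general hx hy hxy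
end
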